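/- Let N be a positive integer with N ≠ 4. The normalizer in SL(2,ℝ) of the subgroup ±Γ₁(N) is generated by −I, the image of Γ₀(N), and the Atkin–Lehner matrices w_d for Hall divisors d of N; equivalently, Norm(Γ₁(N))/±Γ₁(N) is generated by the classes of elements of Γ₀(N)/±1 and the classes of the w_d with d ∣ N and gcd(d, N/d) = 1. -/

import Mathlib

open Matrix CongruenceSubgroup

/-- The reduction-of-scalars map `SL(2, ℤ) →* SL(2, ℝ)`. -/
def SL2ZtoSL2R : Matrix.SpecialLinearGroup (Fin 2) ℤ →* Matrix.SpecialLinearGroup (Fin 2) ℝ :=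
  Matrix.SpecialLinearGroup.map (Int.castRingHom ℝ)

/-- The subgroup `±Γ₁(N)` of `SL(2, ℝ)`, generated by the image of `Γ₁(N)` and `-1`. -/
def PMGamma1 (N : ℕ) : Subgroup (Matrix.SpecialLinearGroup (Fin 2) ℝ) :=
  (Gamma1 N).map SL2ZtoSL2R ⊔ Subgroup.zpowers (-1)

/-- `w` is an Atkin–Lehner matrix of level `N` for the Hall divisor `d` of `N`:
a matrix of the form `(1/√d)·!![da, b; Nc, dd']` with integer entries (and determinant 1,
which holds automatically as `w ∈ SL(2, ℝ)`). -/
def IsAtkinLehner (N d : ℕ) (w : Matrix.SpecialLinearGroup (Fin 2) ℝ) : Prop :=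
  ∃ a b c d' : ℤ, (w : Matrix (Fin 2) (Fin 2) ℝ) =
    (Real.sqrt d)⁻¹ • !![(d : ℝ) * (a : ℝ), (b : ℝ); (N : ℝ) * (c : ℝ), (d : ℝ) * (d' : ℝ)]

/-!
`±Γ₁(N)` consists of the `M ∈ SL(2, ℝ)` with `M ∓ 1` in the lattice `I = (Nℤ, ℤ; Nℤ, Nℤ)`, and
Atkin–Lehner matrices preserve `I` under conjugation. Conversely, let `g` normalize `±Γ₁(N)`. For
`N ≠ 4`, a conjugate of a unipotent element of `Γ₁(N)` has trace `2`, which forces it into `1 + I`;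
hence `g` conjugates `E₀₁` and `N E₁₀` into `I`, and all products of an entry of the first column
of `g` with an entry of `g` are integers. So `g = U / √D` with `U` a primitive integral matrix of
determinant `D`. Every entry of `U` other than `U₀₁` has square divisible by `D`, so `U₀₁` is
coprime to `D` by primitivity. Now `D` divides `U₀₀ U₀₁`, `U₀₁ U₁₁` and `N U₀₁²`, hence `U₀₀`, `U₁₁`
and `N`; the determinant and the first column then give `N ∣ U₁₀` and `gcd(D, N / D) = 1`.
-/

open scoped MatrixGroups

/-- The lattice of real matrices whose upper-right entry is an integer and whose other entries are
integer multiples of `N`. The group `±Γ₁(N)` is the intersection of `SL(2, ℝ)` with the translates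
of this lattice by `1` and `-1`. -/
def gamma1Lattice (N : ℕ) : AddSubgroup (Matrix (Fin 2) (Fin 2) ℝ) where
  carrier := {X | (∃ p : ℤ, X 0 0 = N * p) ∧ (∃ q : ℤ, X 0 1 = q) ∧ (∃ r : ℤ, X 1 0 = N * r) ∧
    ∃ s : ℤ, X 1 1 = N * s}
  zero_mem' := ⟨⟨0, by simp⟩, ⟨0, by simp⟩, ⟨0, by simp⟩, ⟨0, by simp⟩⟩
  add_mem' := by
    rintro X Y ⟨⟨p, hp⟩, ⟨q, hq⟩, ⟨r, hr⟩, s, hs⟩ ⟨⟨p', hp'⟩, ⟨q', hq'⟩, ⟨r', hr'⟩, s', hs'⟩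
    exact ⟨⟨p + p', by simp [hp, hp', mul_add]⟩, ⟨q + q', by simp [hq, hq']⟩,
      ⟨r + r', by simp [hr, hr', mul_add]⟩, ⟨s + s', by simp [hs, hs', mul_add]⟩⟩
  neg_mem' := by
    rintro X ⟨⟨p, hp⟩, ⟨q, hq⟩, ⟨r, hr⟩, s, hs⟩
    exact ⟨⟨-p, by simp [hp]⟩, ⟨-q, by simp [hq]⟩, ⟨-r, by simp [hr]⟩, ⟨-s, by simp [hs]⟩⟩

lemma mem_gamma1Lattice {N : ℕ} {X : Matrix (Fin 2) (Fin 2) ℝ} :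
    X ∈ gamma1Lattice N ↔ (∃ p : ℤ, X 0 0 = N * p) ∧ (∃ q : ℤ, X 0 1 = q) ∧
      (∃ r : ℤ, X 1 0 = N * r) ∧ ∃ s : ℤ, X 1 1 = N * s :=
  Iff.rfl

lemma mem_Gamma1_iff_dvd {N : ℕ} {γ : SL(2, ℤ)} :
    γ ∈ Gamma1 N ↔ (N : ℤ) ∣ γ 0 0 - 1 ∧ (N : ℤ) ∣ γ 1 1 - 1 ∧ (N : ℤ) ∣ γ 1 0 := by
  simp only [Gamma1_mem, ← ZMod.intCast_zmod_eq_zero_iff_dvd, Int.cast_sub, Int.cast_one,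
    sub_eq_zero]

lemma mem_map_Gamma1_iff {N : ℕ} {M : SL(2, ℝ)} :
    M ∈ (Gamma1 N).map SL2ZtoSL2R ↔ (M : Matrix (Fin 2) (Fin 2) ℝ) - 1 ∈ gamma1Lattice N := by
  constructor
  · rintro ⟨γ, hγ, rfl⟩
    obtain ⟨⟨p, hp⟩, ⟨s, hs⟩, ⟨r, hr⟩⟩ := mem_Gamma1_iff_dvd.mp hγ
    refine ⟨⟨p, ?_⟩, ⟨γ 0 1, ?_⟩, ⟨r, ?_⟩, ⟨s, ?_⟩⟩
    · simpa [SL2ZtoSL2R] using congrArg (Int.cast : ℤ → ℝ) hp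
    · simp [SL2ZtoSL2R]
    · simp [SL2ZtoSL2R, hr]
    · simpa [SL2ZtoSL2R] using congrArg (Int.cast : ℤ → ℝ) hs
  · rintro ⟨⟨p, hp⟩, ⟨q, hq⟩, ⟨r, hr⟩, ⟨s, hs⟩⟩
    have hM : (M : Matrix (Fin 2) (Fin 2) ℝ) =
        (!![1 + N * p, q; N * r, 1 + N * s] : Matrix (Fin 2) (Fin 2) ℤ).map
          (Int.castRingHom ℝ) := by
      ext i j
      fin_cases i <;> fin_cases j <;> simp_all [sub_eq_iff_eq_add']
    have hdet : (!![1 + N * p, q; N * r, 1 + N * s] : Matrix (Fin 2) (Fin 2) ℤ).det = 1 := by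
      have := M.det_coe
      rw [hM, ← RingHom.mapMatrix_apply, ← RingHom.map_det] at this
      exact Int.cast_eq_one.mp this
    exact ⟨⟨_, hdet⟩, mem_Gamma1_iff_dvd.mpr (by simp), Subtype.ext hM.symm⟩

lemma neg_one_mem_center {n R : Type*} [Fintype n] [DecidableEq n] [CommRing R]
    [Fact (Even (Fintype.card n))] :
    (-1 : Matrix.SpecialLinearGroup n R) ∈ Subgroup.center (Matrix.SpecialLinearGroup n R) :=
  Subgroup.mem_center_iff.mpr fun g ↦ by rw [mul_neg_one, neg_one_mul]

lemma mem_PMGamma1_iff {N : ℕ} {M : SL(2, ℝ)} :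
    M ∈ PMGamma1 N ↔ (M : Matrix (Fin 2) (Fin 2) ℝ) - 1 ∈ gamma1Lattice N ∨
      (M : Matrix (Fin 2) (Fin 2) ℝ) + 1 ∈ gamma1Lattice N := by
  have hneg : (M : Matrix (Fin 2) (Fin 2) ℝ) + 1 ∈ gamma1Lattice N ↔
      -M ∈ (Gamma1 N).map SL2ZtoSL2R := by
    rw [mem_map_Gamma1_iff, ← neg_mem_iff, Matrix.SpecialLinearGroup.coe_neg, neg_add']
  have hnormal : (Subgroup.zpowers (-1 : SL(2, ℝ))).Normal :=
    ⟨fun x hx h ↦ by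
      have hcomm := Subgroup.mem_center_iff.mp (Subgroup.zpowers_le.mpr neg_one_mem_center hx) h
      rwa [hcomm, mul_inv_cancel_right]⟩
  rw [hneg, ← mem_map_Gamma1_iff]
  constructor
  · intro hM
    obtain ⟨γ, hγ, ε, ⟨k, rfl⟩, rfl⟩ := Subgroup.mem_sup_of_normal_right.mp hM
    rcases Int.even_or_odd k with hk | hk
    · left
      simpa [hk.neg_one_zpow] using hγ
    · right
      simpa [hk.neg_one_zpow] using hγ
  · have hle : (Gamma1 N).map SL2ZtoSL2R ≤ PMGamma1 N := le_sup_left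
    have hneg_one : -1 ∈ PMGamma1 N := Subgroup.mem_sup_right (Subgroup.mem_zpowers _)
    rintro (hM | hM)
    · exact hle hM
    · simpa using mul_mem hneg_one (hle hM)

lemma coe_mul_coe_inv {n R : Type*} [Fintype n] [DecidableEq n] [CommRing R]
    (A : Matrix.SpecialLinearGroup n R) :
    (A : Matrix n n R) * (A⁻¹ : Matrix.SpecialLinearGroup n R) = 1 := by
  rw [← Matrix.SpecialLinearGroup.coe_mul, mul_inv_cancel, Matrix.SpecialLinearGroup.coe_one]

namespace IsAtkinLehner

lemma conj_mem_gamma1Lattice {N d : ℕ} (hN : 0 < N) (hd : d ∣ N)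
    {w : SL(2, ℝ)} (hw : IsAtkinLehner N d w)
    {X : Matrix (Fin 2) (Fin 2) ℝ} (hX : X ∈ gamma1Lattice N) :
    (w : Matrix (Fin 2) (Fin 2) ℝ) * X * (w⁻¹ : SL(2, ℝ)) ∈
      gamma1Lattice N := by
  obtain ⟨n, rfl⟩ := hd
  obtain ⟨a, b, c, e, hw⟩ := hw
  obtain ⟨⟨p, hp⟩, ⟨q, hq⟩, ⟨r, hr⟩, ⟨s, hs⟩⟩ := hX
  have hd0 : (0 : ℝ) < d := by exact_mod_cast Nat.pos_of_mul_pos_right hN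
  have hsq : (Real.sqrt d)⁻¹ ^ 2 * d = 1 := by
    rw [inv_pow, Real.sq_sqrt hd0.le, inv_mul_cancel₀ hd0.ne']
  rw [Matrix.SpecialLinearGroup.coe_inv, adjugate_fin_two, hw]
  generalize (Real.sqrt d)⁻¹ = u at hsq
  simp only [mem_gamma1Lattice, mul_apply, Fin.sum_univ_two, Matrix.smul_apply, of_apply,
    cons_val', cons_val_zero, cons_val_one, cons_val_fin_one, smul_eq_mul, hp, hq, hr, hs]
  push_cast
  refine ⟨⟨d * a * e * p + b * r * e - a * q * c - n * b * c * s, ?_⟩,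
    ⟨-a * b * (d * n * p) - n * r * b ^ 2 + d * a ^ 2 * q + a * b * (d * n * s), ?_⟩,
    ⟨c * e * (d * n * p) + d * e ^ 2 * r - n * c ^ 2 * q - e * c * (d * n * s), ?_⟩,
    ⟨-n * c * b * p - e * r * b + c * q * a + d * e * a * s, ?_⟩⟩ <;> push_cast
  · linear_combination (d * n * (d * a * e * p + b * r * e - a * q * c - n * b * c * s)) * hsq
  · linear_combination
      (-a * b * (d * n * p) - n * r * b ^ 2 + d * a ^ 2 * q + a * b * (d * n * s)) * hsq
  · linear_combination
      (d * n * (c * e * (d * n * p) + d * e ^ 2 * r - n * c ^ 2 * q - e * c * (d * n * s))) * hsq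
  · linear_combination (d * n * (-n * c * b * p - e * r * b + c * q * a + d * e * a * s)) * hsq

lemma conj_mem_PMGamma1 {N d : ℕ} (hN : 0 < N) (hd : d ∣ N)
    {w : SL(2, ℝ)} (hw : IsAtkinLehner N d w)
    {M : SL(2, ℝ)} (hM : M ∈ PMGamma1 N) : w * M * w⁻¹ ∈ PMGamma1 N := by
  refine mem_PMGamma1_iff.mpr ((mem_PMGamma1_iff.mp hM).imp (fun h ↦ ?_) fun h ↦ ?_) <;>
    simpa only [mul_sub, sub_mul, mul_add, add_mul, mul_one, coe_mul_coe_inv,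
      Matrix.SpecialLinearGroup.coe_mul] using hw.conj_mem_gamma1Lattice hN hd h

lemma inv {N d : ℕ} {w : SL(2, ℝ)} (hw : IsAtkinLehner N d w) :
    IsAtkinLehner N d w⁻¹ := by
  obtain ⟨a, b, c, e, hw⟩ := hw
  refine ⟨e, -b, -c, a, ?_⟩
  rw [Matrix.SpecialLinearGroup.coe_inv, hw, adjugate_fin_two]
  ext i j
  fin_cases i <;> fin_cases j <;> simp

lemma mem_normalizer {N d : ℕ} (hN : 0 < N) (hd : d ∣ N)
    {w : SL(2, ℝ)} (hw : IsAtkinLehner N d w) :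
    w ∈ Subgroup.normalizer (PMGamma1 N : Set (SL(2, ℝ))) := by
  refine Subgroup.mem_normalizer_iff.mpr fun M ↦ ⟨hw.conj_mem_PMGamma1 hN hd, fun hM ↦ ?_⟩
  simpa [mul_assoc] using hw.inv.conj_mem_PMGamma1 hN hd hM

end IsAtkinLehner

lemma isAtkinLehner_one_of_mem_Gamma0 {N : ℕ} {γ : SL(2, ℤ)}
    (hγ : γ ∈ Gamma0 N) : IsAtkinLehner N 1 (SL2ZtoSL2R γ) := by
  obtain ⟨r, hr⟩ := (ZMod.intCast_zmod_eq_zero_iff_dvd _ N).mp (Gamma0_mem.mp hγ)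
  refine ⟨γ 0 0, γ 0 1, r, γ 1 1, ?_⟩
  ext i j
  fin_cases i <;> fin_cases j <;> simp [SL2ZtoSL2R, hr]

section Normalizer

variable {N : ℕ} {g : SL(2, ℝ)}

lemma sub_one_mem_gamma1Lattice_of_trace_eq_two (hN4 : N ≠ 4)
    {M : SL(2, ℝ)} (hM : M ∈ PMGamma1 N)
    (htr : trace (M : Matrix (Fin 2) (Fin 2) ℝ) = 2) :
    (M : Matrix (Fin 2) (Fin 2) ℝ) - 1 ∈ gamma1Lattice N := by
  refine (mem_PMGamma1_iff.mp hM).elim id fun h ↦ ?_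
  have hdvd_four : N ∣ 4 := by
    obtain ⟨⟨p, hp⟩, -, -, s, hs⟩ := h
    have : (N : ℝ) * (p + s) = 4 := by
      rw [trace_fin_two] at htr
      simp only [Matrix.add_apply, one_apply_eq] at hp hs
      linear_combination htr - hp - hs
    exact Int.natCast_dvd_natCast.mp ⟨p + s, by exact_mod_cast this.symm⟩
  obtain ⟨m, hm⟩ : N ∣ 2 := by
    have := Nat.le_of_dvd four_pos hdvd_four
    interval_cases N <;> omega
  have htwo : (1 + 1 : Matrix (Fin 2) (Fin 2) ℝ) ∈ gamma1Lattice N := by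
    have hmR : (1 + 1 : ℝ) = N * (m : ℤ) := by rw [one_add_one_eq_two]; exact_mod_cast hm
    exact ⟨⟨m, by simpa using hmR⟩, ⟨0, by simp⟩, ⟨0, by simp⟩, ⟨m, by simpa using hmR⟩⟩
  simpa only [add_sub_add_right_eq_sub] using sub_mem h htwo

lemma conj_single_mem_gamma1Lattice (hN4 : N ≠ 4)
    (hg : g ∈ Subgroup.normalizer (PMGamma1 N : Set (SL(2, ℝ))))
    {i j : Fin 2} (hij : i ≠ j) {t : ℝ} (ht : single i j t ∈ gamma1Lattice N) :
    (g : Matrix (Fin 2) (Fin 2) ℝ) * single i j t * (g⁻¹ : SL(2, ℝ)) ∈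
      gamma1Lattice N := by
  let T : SL(2, ℝ) := ⟨transvection i j t, det_transvection_of_ne i j hij t⟩
  have hT_sub_one : (T : Matrix (Fin 2) (Fin 2) ℝ) - 1 = single i j t := add_sub_cancel_left _ _
  have hT : T ∈ PMGamma1 N := mem_PMGamma1_iff.mpr (Or.inl (hT_sub_one ▸ ht))
  have htr : trace ((g * T * g⁻¹ : SL(2, ℝ)) :
      Matrix (Fin 2) (Fin 2) ℝ) = 2 := by
    rw [Matrix.SpecialLinearGroup.coe_mul, trace_mul_comm, ← Matrix.SpecialLinearGroup.coe_mul,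
      inv_mul_cancel_left]
    simp [T, transvection, hij]
  have hconj := sub_one_mem_gamma1Lattice_of_trace_eq_two hN4
    ((Subgroup.mem_normalizer_iff.mp hg T).mp hT) htr
  rwa [← hT_sub_one, mul_sub, mul_one, sub_mul, coe_mul_coe_inv]

end Normalizer

lemma mul_single_mul_apply {l m n o R : Type*} [Fintype m] [DecidableEq m] [Fintype n]
    [DecidableEq n] [NonUnitalSemiring R] (A : Matrix l m R) (i : m) (j : n) (t : R)
    (B : Matrix n o R) (k : l) (k' : o) : (A * single i j t * B) k k' = A k i * t * B j k' := by
  rw [mul_apply, Finset.sum_eq_single j (fun x _ hx ↦ by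
    rw [mul_single_apply_of_ne _ _ _ _ _ hx, zero_mul]) (by simp), mul_single_apply_same]

lemma exists_primitive_eq_smul {m n : Type*} [Finite m] [Finite n] {A : Matrix m n ℝ} {k : m}
    {l : n} (hk : A k l ≠ 0) (hA : ∀ i j, ∃ z : ℤ, A k l * A i j = z) :
    ∃ (r : ℝ) (U : Matrix m n ℤ), A = r • U.map Int.cast ∧
      ∀ p : ℤ, Prime p → ∃ i j, ¬ p ∣ U i j := by
  have := Fintype.ofFinite m
  have := Fintype.ofFinite n
  choose Z hZ using hA
  obtain ⟨u, hu, hgcd⟩ := Finset.extract_gcd (fun ij : m × n ↦ Z ij.1 ij.2)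
    (Finset.univ_nonempty_iff.mpr ⟨(k, l)⟩)
  set c := Finset.univ.gcd fun ij : m × n ↦ Z ij.1 ij.2
  refine ⟨(A k l)⁻¹ * c, fun i j ↦ u (i, j), ?_, fun p hp ↦ ?_⟩
  · ext i j
    have hZu : (Z i j : ℝ) = c * u (i, j) := by exact_mod_cast hu (i, j) (Finset.mem_univ _)
    change A i j = (A k l)⁻¹ * c * (u (i, j) : ℝ)
    rw [mul_assoc, ← hZu, ← hZ, inv_mul_cancel_left₀ hk]
  · by_contra! hdvd
    exact hp.not_dvd_one (hgcd ▸ Finset.dvd_gcd fun ij _ ↦ hdvd ij.1 ij.2)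

lemma exists_primitive_eq_inv_sqrt_det_smul {g : SL(2, ℝ)} {k l : Fin 2} (hk : g k l ≠ 0)
    (hg : ∀ i j, ∃ z : ℤ, g k l * g i j = z) :
    ∃ (d : ℕ) (U : Matrix (Fin 2) (Fin 2) ℤ), d ≠ 0 ∧ U.det = d ∧
      (∀ p : ℤ, Prime p → ∃ i j, ¬ p ∣ U i j) ∧
      (g : Matrix (Fin 2) (Fin 2) ℝ) = (Real.sqrt d)⁻¹ • U.map Int.cast := by
  obtain ⟨r, U, hgU, hU⟩ := exists_primitive_eq_smul hk hg
  have hdet : r ^ 2 * U.det = 1 := by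
    have hdet_map : (U.map (Int.cast : ℤ → ℝ)).det = U.det :=
      ((Int.castRingHom ℝ).map_det U).symm
    simpa only [hgU, det_smul, Fintype.card_fin, hdet_map] using g.det_coe
  have hdet_pos : 0 < U.det := by
    have : (0 : ℝ) < U.det := pos_of_mul_pos_right (hdet ▸ one_pos) (sq_nonneg r)
    exact_mod_cast this
  obtain ⟨d, hd⟩ := Int.eq_ofNat_of_zero_le hdet_pos.le
  have hr : r = (Real.sqrt d)⁻¹ ∨ r = -(Real.sqrt d)⁻¹ := by
    rw [← sq_eq_sq_iff_eq_or_eq_neg, inv_pow, Real.sq_sqrt d.cast_nonneg]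
    exact eq_inv_of_mul_eq_one_left (by simpa [hd] using hdet)
  have hd0 : d ≠ 0 := by lia
  rcases hr with rfl | rfl
  · exact ⟨d, U, hd0, hd, hU, hgU⟩
  · refine ⟨d, -U, hd0, by simpa [det_neg] using hd, by simpa using hU, ?_⟩
    rw [hgU]
    ext i j
    simp

lemma isCoprime_of_dvd_sq {D a b c e : ℤ} (hD : D ≠ 0)
    (hprim : ∀ p : ℤ, Prime p → p ∣ a → p ∣ b → p ∣ c → ¬ p ∣ e)
    (ha : D ∣ a ^ 2) (hc : D ∣ c ^ 2) (he : D ∣ e ^ 2) : IsCoprime D b :=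
  isCoprime_of_prime_dvd (fun h ↦ hD h.1) fun p hp hpD hpb ↦
    hprim p hp (hp.dvd_of_dvd_pow (hpD.trans ha)) hpb (hp.dvd_of_dvd_pow (hpD.trans hc))
      (hp.dvd_of_dvd_pow (hpD.trans he))

lemma exists_isCoprime_factorization {N D a b c e : ℤ} (hD : D ≠ 0) (hdet : a * e - b * c = D)
    (hcop : IsCoprime D b) (hab : D ∣ a * b) (hbe : D ∣ b * e) (hbb : D ∣ N * b ^ 2)
    (hac : D * N ∣ a * c) (hcc : D * N ∣ c ^ 2) :
    ∃ n x y w : ℤ, N = D * n ∧ IsCoprime D n ∧ a = D * x ∧ c = N * y ∧ e = D * w := by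
  obtain ⟨x, rfl⟩ : D ∣ a := hcop.dvd_of_dvd_mul_right hab
  obtain ⟨w, rfl⟩ : D ∣ e := hcop.dvd_of_dvd_mul_left hbe
  obtain ⟨n, rfl⟩ : D ∣ N := hcop.pow_right.dvd_of_dvd_mul_right hbb
  obtain ⟨z, rfl⟩ : D ∣ c :=
    hcop.dvd_of_dvd_mul_left ⟨D * x * w - 1, by linear_combination -hdet⟩
  have hbezout : D * (x * w) - b * z = 1 := mul_left_cancel₀ hD (by linear_combination hdet)
  have hnxz : n ∣ x * z := by
    obtain ⟨q, hq⟩ := hac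
    exact ⟨q, mul_left_cancel₀ (mul_ne_zero hD hD) (by linear_combination hq)⟩
  have hnzz : n ∣ z ^ 2 := by
    obtain ⟨q, hq⟩ := hcc
    exact ⟨q, mul_left_cancel₀ (mul_ne_zero hD hD) (by linear_combination hq)⟩
  obtain ⟨y, rfl⟩ : n ∣ z := by
    have hz : x * z * (D * w) - z ^ 2 * b = z := by linear_combination z * hbezout
    exact hz ▸ dvd_sub (hnxz.mul_right _) (hnzz.mul_right _)
  exact ⟨n, x, y, w, rfl, ⟨x * w, -(b * y), by linear_combination hbezout⟩, rfl, by ring, rfl⟩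

section ConjSingle

variable {N : ℕ} {g : SL(2, ℝ)}

lemma exists_int_of_conj_single_zero_one_mem
    (hg : (g : Matrix (Fin 2) (Fin 2) ℝ) * single (0 : Fin 2) (1 : Fin 2) (1 : ℝ) *
      (g⁻¹ : SL(2, ℝ)) ∈ gamma1Lattice N) :
    (∃ z : ℤ, g 0 0 ^ 2 = z) ∧ (∃ z : ℤ, g 0 0 * g 1 0 = N * z) ∧
      ∃ z : ℤ, g 1 0 ^ 2 = N * z := by
  simp only [mem_gamma1Lattice, mul_single_mul_apply, Matrix.SpecialLinearGroup.coe_inv,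
    adjugate_fin_two, of_apply, cons_val', cons_val_zero, cons_val_one, cons_val_fin_one] at hg
  obtain ⟨-, ⟨A, hA⟩, ⟨C, hC⟩, K, hK⟩ := hg
  refine ⟨⟨A, by linear_combination hA⟩, ⟨K, by linear_combination hK⟩, -C, ?_⟩
  push_cast
  linear_combination -hC

lemma exists_int_of_conj_single_one_zero_mem (hN : N ≠ 0)
    (hg : (g : Matrix (Fin 2) (Fin 2) ℝ) * single (1 : Fin 2) (0 : Fin 2) (N : ℝ) *
      (g⁻¹ : SL(2, ℝ)) ∈ gamma1Lattice N) :
    (∃ z : ℤ, N * g 0 1 ^ 2 = z) ∧ (∃ z : ℤ, g 0 1 * g 1 1 = z) ∧ ∃ z : ℤ, g 1 1 ^ 2 = z := by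
  simp only [mem_gamma1Lattice, mul_single_mul_apply, Matrix.SpecialLinearGroup.coe_inv,
    adjugate_fin_two, of_apply, cons_val', cons_val_zero, cons_val_one, cons_val_fin_one] at hg
  obtain ⟨⟨S, hS⟩, ⟨B, hB⟩, ⟨E, hE⟩, -⟩ := hg
  have hNR : (N : ℝ) ≠ 0 := Nat.cast_ne_zero.mpr hN
  refine ⟨⟨-B, ?_⟩, ⟨S, mul_left_cancel₀ hNR ?_⟩, E, mul_left_cancel₀ hNR ?_⟩
  · push_cast
    linear_combination -hB
  · linear_combination hS
  · linear_combination hE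

lemma exists_int_mul_of_conj_single_mem (hN : N ≠ 0)
    (hupper : (g : Matrix (Fin 2) (Fin 2) ℝ) * single (0 : Fin 2) (1 : Fin 2) (1 : ℝ) *
      (g⁻¹ : SL(2, ℝ)) ∈ gamma1Lattice N)
    (hlower : (g : Matrix (Fin 2) (Fin 2) ℝ) * single (1 : Fin 2) (0 : Fin 2) (N : ℝ) *
      (g⁻¹ : SL(2, ℝ)) ∈ gamma1Lattice N) (k i j : Fin 2) :
    ∃ z : ℤ, g k 0 * g i j = z := by
  obtain ⟨⟨A, hA⟩, ⟨K, hK⟩, C, hC⟩ := exists_int_of_conj_single_zero_one_mem hupper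
  obtain ⟨⟨B, hB⟩, ⟨S, hS⟩, E, hE⟩ := exists_int_of_conj_single_one_zero_mem hN hlower
  have hdet : g 0 0 * g 1 1 - g 0 1 * g 1 0 = 1 := by rw [← det_fin_two, g.det_coe]
  -- Multiplying by the determinant, e.g. `ae = ae(ae - bc) = a² e² - ac be`, reduces the mixed
  -- products to the six known ones.
  have hae : g 0 0 * g 1 1 = (A * E - N * K * S : ℤ) := by
    push_cast
    linear_combination (-(g 0 0 * g 1 1)) * hdet + g 1 1 ^ 2 * hA + A * hE - g 0 1 * g 1 1 * hK -
      N * K * hS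
  have hab : g 0 0 * g 0 1 = (A * S - K * B : ℤ) := by
    push_cast
    linear_combination (-(g 0 0 * g 0 1)) * hdet + g 0 1 * g 1 1 * hA + A * hS - g 0 1 ^ 2 * hK -
      K * hB
  have hce : g 1 0 * g 1 1 = (N * K * E - N * C * S : ℤ) := by
    push_cast
    linear_combination (-(g 1 0 * g 1 1)) * hdet + g 1 1 ^ 2 * hK + N * K * hE -
      g 0 1 * g 1 1 * hC - N * C * hS
  have hcb : g 1 0 * g 0 1 = (A * E - N * K * S - 1 : ℤ) := by
    rw [Int.cast_sub, ← hae, Int.cast_one]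
    linear_combination -hdet
  fin_cases k <;> fin_cases i <;> fin_cases j
  · exact ⟨A, (sq (g 0 0)).symm.trans hA⟩
  · exact ⟨_, hab⟩
  · exact ⟨N * K, by exact_mod_cast hK⟩
  · exact ⟨_, hae⟩
  · exact ⟨N * K, by simpa [mul_comm] using hK⟩
  · exact ⟨_, hcb⟩
  · exact ⟨N * C, by simpa [sq] using hC⟩
  · exact ⟨_, hce⟩

lemma mul_eq_of_inv_sqrt_mul {d : ℕ} (hd : d ≠ 0) {x y m : ℤ}
    (h : (Real.sqrt d)⁻¹ * x * ((Real.sqrt d)⁻¹ * y) = m) : x * y = d * m := by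
  have hsq : Real.sqrt d ^ 2 = d := Real.sq_sqrt d.cast_nonneg
  have hsqrt : Real.sqrt d ≠ 0 := Real.sqrt_ne_zero'.mpr (by positivity)
  rify
  rw [← h, ← hsq, Real.sqrt_sq (Real.sqrt_nonneg _)]
  field_simp

lemma isAtkinLehner_of_eq_inv_sqrt_smul {d : ℕ} (hd : d ≠ 0)
    {U : Matrix (Fin 2) (Fin 2) ℤ}
    (hgU : (g : Matrix (Fin 2) (Fin 2) ℝ) = (Real.sqrt d)⁻¹ • U.map Int.cast) (hdet : U.det = d)
    (hcop : IsCoprime (d : ℤ) (U 0 1)) (hab : (d : ℤ) ∣ U 0 0 * U 0 1)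
    (hbe : (d : ℤ) ∣ U 0 1 * U 1 1) (hbb : (d : ℤ) ∣ N * U 0 1 ^ 2)
    (hac : (d * N : ℤ) ∣ U 0 0 * U 1 0) (hcc : (d * N : ℤ) ∣ U 1 0 ^ 2) :
    d ∣ N ∧ Nat.gcd d (N / d) = 1 ∧ IsAtkinLehner N d g := by
  have hdZ : (d : ℤ) ≠ 0 := Nat.cast_ne_zero.mpr hd
  obtain ⟨n, x, y, w, hNn, hdn, hx, hy, hw⟩ := exists_isCoprime_factorization hdZ
    (by rw [← det_fin_two, hdet]) hcop hab hbe hbb hac hcc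
  obtain ⟨n', rfl⟩ : d ∣ N := Int.natCast_dvd_natCast.mp ⟨n, hNn⟩
  obtain rfl : (n' : ℤ) = n := mul_left_cancel₀ hdZ (by rw [← hNn, Nat.cast_mul])
  refine ⟨dvd_mul_right d n', ?_, x, U 0 1, y, w, ?_⟩
  · rw [Nat.mul_div_cancel_left _ (Nat.pos_of_ne_zero hd)]
    exact Nat.isCoprime_iff_coprime.mp hdn
  · rw [hgU, eta_fin_two (U.map Int.cast)]
    simp [hx, hy, hw]

lemma exists_isAtkinLehner_of_conj_single_mem (hN : N ≠ 0)
    (hupper : (g : Matrix (Fin 2) (Fin 2) ℝ) * single (0 : Fin 2) (1 : Fin 2) (1 : ℝ) *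
      (g⁻¹ : SL(2, ℝ)) ∈ gamma1Lattice N)
    (hlower : (g : Matrix (Fin 2) (Fin 2) ℝ) * single (1 : Fin 2) (0 : Fin 2) (N : ℝ) *
      (g⁻¹ : SL(2, ℝ)) ∈ gamma1Lattice N) :
    ∃ d : ℕ, d ∣ N ∧ Nat.gcd d (N / d) = 1 ∧ IsAtkinLehner N d g := by
  have hint := exists_int_mul_of_conj_single_mem hN hupper hlower
  obtain ⟨⟨A, hA⟩, ⟨K, hK⟩, C, hC⟩ := exists_int_of_conj_single_zero_one_mem hupper
  obtain ⟨⟨B, hB⟩, ⟨S, hS⟩, E, hE⟩ := exists_int_of_conj_single_one_zero_mem hN hlower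
  obtain ⟨T, hT⟩ := hint 0 0 1
  obtain ⟨k, hk⟩ : ∃ k, g k 0 ≠ 0 := by
    by_contra! hcol
    exact zero_ne_one ((det_eq_zero_of_column_eq_zero 0 hcol).symm.trans g.det_coe)
  obtain ⟨d, U, hd, hdet, hprim, hgU⟩ := exists_primitive_eq_inv_sqrt_det_smul hk (hint k)
  have hmul {i j i' j' : Fin 2} {m : ℤ} (h : g i j * g i' j' = m) : U i j * U i' j' = d * m := by
    rw [hgU] at h
    exact mul_eq_of_inv_sqrt_mul hd h
  have haa : U 0 0 ^ 2 = d * A := by rw [sq, hmul (by rw [← sq, hA])]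
  have hee : U 1 1 ^ 2 = d * E := by rw [sq, hmul (by rw [← sq, hE])]
  have hcc : U 1 0 ^ 2 = d * (N * C) := by rw [sq, hmul (by rw [← sq, hC]; norm_cast)]
  have hac : U 0 0 * U 1 0 = d * (N * K) := hmul (by rw [hK]; norm_cast)
  have hbb : N * U 0 1 ^ 2 = d * B := by
    rw [sq, ← mul_assoc]
    refine mul_eq_of_inv_sqrt_mul hd ?_
    rw [← hB, hgU]
    simp only [Matrix.smul_apply, map_apply, smul_eq_mul]
    push_cast
    ring
  have hcop : IsCoprime (d : ℤ) (U 0 1) := by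
    refine isCoprime_of_dvd_sq (Nat.cast_ne_zero.mpr hd) (fun p hp ha hb hc he ↦ ?_)
      ⟨A, haa⟩ ⟨N * C, hcc⟩ ⟨E, hee⟩
    obtain ⟨i, j, hij⟩ := hprim p hp
    fin_cases i <;> fin_cases j <;> contradiction
  exact ⟨d, isAtkinLehner_of_eq_inv_sqrt_smul hd hgU hdet hcop ⟨T, hmul hT⟩ ⟨S, hmul hS⟩
    ⟨B, hbb⟩ ⟨K, by rw [hac, mul_assoc]⟩ ⟨C, by rw [hcc, mul_assoc]⟩⟩

end ConjSingle

lemma exists_isAtkinLehner_of_mem_normalizer {N : ℕ} (hN : N ≠ 0) (hN4 : N ≠ 4) {g : SL(2, ℝ)}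
    (hg : g ∈ Subgroup.normalizer (PMGamma1 N : Set (SL(2, ℝ)))) :
    ∃ d : ℕ, d ∣ N ∧ Nat.gcd d (N / d) = 1 ∧ IsAtkinLehner N d g := by
  refine exists_isAtkinLehner_of_conj_single_mem hN
    (conj_single_mem_gamma1Lattice hN4 hg zero_ne_one ?_)
    (conj_single_mem_gamma1Lattice hN4 hg one_ne_zero ?_)
  · exact ⟨⟨0, by simp⟩, ⟨1, by simp⟩, ⟨0, by simp⟩, ⟨0, by simp⟩⟩
  · exact ⟨⟨0, by simp⟩, ⟨0, by simp⟩, ⟨1, by simp⟩, ⟨0, by simp⟩⟩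

/-- For `N ≠ 4`, the normalizer in `SL(2, ℝ)` of `±Γ₁(N)` is generated by `-1`, the image
of `Γ₀(N)`, and the Atkin–Lehner matrices `w_d` for Hall divisors `d` of `N`; that is,
`Norm(Γ₁(N))/±Γ₁(N)` is generated by `Γ₀(N)/±1` and the `w_d` with `d ∣ N`,
`gcd(d, N/d) = 1`. -/
theorem normalizer_Gamma1_eq_closure
    (N : ℕ) (hN : 0 < N) (hN4 : N ≠ 4) :
    Subgroup.normalizer (PMGamma1 N) =
      Subgroup.closure
        ({-1} ∪ (SL2ZtoSL2R '' (Gamma0 N : Set (Matrix.SpecialLinearGroup (Fin 2) ℤ))) ∪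
          {w : Matrix.SpecialLinearGroup (Fin 2) ℝ |
            ∃ d : ℕ, d ∣ N ∧ Nat.gcd d (N / d) = 1 ∧ IsAtkinLehner N d w}) := by
  refine le_antisymm (fun g hg ↦ Subgroup.subset_closure ?_) ((Subgroup.closure_le _).mpr ?_)
  · exact Or.inr (exists_isAtkinLehner_of_mem_normalizer hN.ne' hN4 hg)
  · rintro w ((rfl | ⟨γ, hγ, rfl⟩) | ⟨d, hd, -, hw⟩)
    · exact Subgroup.center_le_normalizer _ neg_one_mem_center
    · exact (isAtkinLehner_one_of_mem_Gamma0 hγ).mem_normalizer hN (one_dvd N)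
    · exact hw.mem_normalizer hN hd
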